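/- Let X be a complex Hilbert space, let T ∈ B(X) be a contraction (‖T‖ ≤ 1), let Λ := σ(T) ∩ 𝕋, and let a ∈ ℓ¹(ℕ). Then the (nonincreasing) sequence of operator norms ‖Tⁿ â(T)‖ satisfies limsup_{n→∞} ‖Tⁿ â(T)‖ ≤ dist(a, K_Λ). (ℤ₊-instance of Theorem 4.2 of the paper.) -/

import Mathlib

open Filter Topology

/-!
Pick `vₙ` in the unit ball almost attaining `‖Tⁿ â(T)‖`, average the vector states of
`vₙ, T vₙ, …, Tⁿ vₙ`, and take a limit along an ultrafilter. The result is a positive functional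
`ψ` on `B(X)` with `ψ(T* B T) = ψ(B)`, `ψ(1) ≤ 1` and `ψ(â(T)* â(T)) ≥ (lim ‖Tⁿ â(T)‖)²`.

In the GNS representation of `ψ`, the commutant of `T` acts on the closed cyclic subspace it
generates from the vector of `1`. There `T` acts as an isometry `V` with `σ(V) ⊆ σ(T)`, because
resolvents of `T` stay in the commutant. If `σ(V)` misses a point of the circle then `V` is unitary;
otherwise `σ(V)` contains the whole circle, and `V` is the corner of an upper triangular unitary.
Either way the continuous functional calculus gives `‖â(V)‖ ≤ sup |â|` over `σ(V) ∩ 𝕋`.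

So the limit is at most the supremum of `|â|` on `Λ`, and `â` agrees on `Λ` with the transform of
`ι(a) - b` for every `b ∈ K_Λ`, which is bounded by `‖ι(a) - b‖₁`.
-/

section Isometry

theorem summable_smul_pow_of_norm_le_one {𝕜 A : Type*} [NormedField 𝕜] [NormedRing A]
    [NormedAlgebra 𝕜 A] [CompleteSpace A] {t : A} (ht : ‖t‖ ≤ 1) {a : ℕ → 𝕜}
    (ha : Summable fun n => ‖a n‖) : Summable fun n => a n • t ^ n := by
  refine ha.of_norm_bounded_eventually_nat ((eventually_gt_atTop 0).mono fun n hn => ?_)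
  calc ‖a n • t ^ n‖ ≤ ‖a n‖ * ‖t‖ ^ n :=
        (norm_smul_le _ _).trans (by gcongr; exact norm_pow_le' t hn)
    _ ≤ ‖a n‖ := mul_le_of_le_one_right (norm_nonneg _) (pow_le_one₀ (norm_nonneg _) ht)

theorem mem_unitary_of_star_mul_self_of_notMem_spectrum {A : Type*} [Ring A] [StarRing A]
    [Algebra ℂ A] [StarModule ℂ A] {v : A} (hv : star v * v = 1) {μ : ℂ} (hμ : ‖μ‖ = 1)
    (hμv : μ ∉ spectrum ℂ v) : v ∈ unitary A := by
  have hunit : IsUnit (algebraMap ℂ A μ - v) := spectrum.notMem_iff.1 hμv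
  have hμμ : μ * star μ = 1 := by simp [Complex.mul_conj', hμ]
  have hμ0 : μ ≠ 0 := norm_ne_zero_iff.1 (hμ ▸ one_ne_zero)
  have hfactor : star v * (algebraMap ℂ A μ - v) =
      algebraMap ℂ A (-μ) * star (algebraMap ℂ A μ - v) := by
    rw [star_sub, ← algebraMap_star_comm, mul_sub, mul_sub, hv, ← map_mul, neg_mul, hμμ,
      ← Algebra.commutes]
    simp only [map_neg, map_one, neg_mul]
    abel
  have hstar : IsUnit (star v) := by
    rw [← hunit.mul_right_iff, hfactor]
    exact ((IsUnit.mk0 (-μ) (neg_ne_zero.2 hμ0)).map _).mul hunit.star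
  exact (isUnit_star.1 hstar).mem_unitary_of_star_mul_self hv

variable {A : Type*} [CStarAlgebra A]

theorem hasSum_smul_pow_cfc {u : A} (hu : IsStarNormal u) (hσ : ∀ z ∈ spectrum ℂ u, ‖z‖ ≤ 1)
    {a : ℕ → ℂ} (ha : Summable fun n => ‖a n‖) :
    HasSum (fun n => a n • u ^ n) (cfc (fun z : ℂ => ∑' n, a n • z ^ n) u) := by
  have hterm : ∀ n, ∀ z ∈ spectrum ℂ u, ‖a n • z ^ n‖ ≤ ‖a n‖ := fun n z hz => by
    rw [norm_smul, norm_pow]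
    exact mul_le_of_le_one_right (norm_nonneg _) (pow_le_one₀ (norm_nonneg _) (hσ z hz))
  refine (tendsto_cfc_fun (a := u) (tendstoUniformlyOn_tsum ha hterm)
    (Eventually.of_forall fun s => by fun_prop)).congr fun s => ?_
  calc cfc (fun z : ℂ => ∑ n ∈ s, a n • z ^ n) u
      = ∑ n ∈ s, cfc (fun z : ℂ => a n • z ^ n) u := by
        rw [← cfc_sum (fun n (z : ℂ) => a n • z ^ n) u s]; congr 1; ext z; simp
    _ = ∑ n ∈ s, a n • u ^ n := Finset.sum_congr rfl fun n _ => by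
        rw [cfc_smul (a n) (fun z : ℂ => z ^ n) u, cfc_pow_id u n]

theorem norm_tsum_smul_pow_le_of_mem_unitary {u : A} (hu : u ∈ unitary A) {a : ℕ → ℂ}
    (ha : Summable fun n => ‖a n‖) {M : ℝ} (hM : 0 ≤ M)
    (hbound : ∀ z ∈ spectrum ℂ u, ‖∑' n, a n • z ^ n‖ ≤ M) :
    ‖∑' n, a n • u ^ n‖ ≤ M := by
  have hσ : ∀ z ∈ spectrum ℂ u, ‖z‖ ≤ 1 := fun z hz =>
    (spectrum.norm_eq_one_of_unitary hu hz).le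
  rw [(hasSum_smul_pow_cfc (isStarNormal_of_mem_unitary hu) hσ ha).tsum_eq]
  exact norm_cfc_le hM hbound

section Dilation

variable {A : Type*} [Ring A] [StarRing A]

/-- The unitary dilation of Halmos type of an isometry `v`. The entry `0` below the diagonal makes
`v ^ n` the top left corner of the `n`-th power for every `n`. -/
def isometryDilation (v : A) : CStarMatrix (Fin 2) (Fin 2) A :=
  CStarMatrix.ofMatrix !![v, 1 - v * star v; 0, star v]

theorem isometryDilation_mem_unitary {v : A} (hv : star v * v = 1) :
    isometryDilation v ∈ unitary (CStarMatrix (Fin 2) (Fin 2) A) := by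
  have hv' : v * star v * v = v := by rw [mul_assoc, hv, mul_one]
  have hv'' : star v * (v * star v) = star v := by rw [← mul_assoc, hv, one_mul]
  have hproj : v * star v * (v * star v) = v * star v := by rw [← mul_assoc, hv']
  rw [Unitary.mem_iff]
  constructor <;> ext i j <;> fin_cases i <;> fin_cases j <;>
    simp [isometryDilation, CStarMatrix.star_eq_conjTranspose,
      CStarMatrix.mul_apply, mul_sub, sub_mul, hv, hv', hv'', hproj]

theorem isometryDilation_pow_col_zero (v : A) (n : ℕ) :
    (isometryDilation v ^ n) 0 0 = v ^ n ∧ (isometryDilation v ^ n) 1 0 = 0 := by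
  induction n with
  | zero => simp
  | succ n ih =>
    have h00 : isometryDilation v 0 0 = v := rfl
    have h10 : isometryDilation v 1 0 = 0 := rfl
    simp [pow_succ, CStarMatrix.mul_apply, ih, h00, h10]

end Dilation

theorem norm_tsum_smul_pow_le_isometryDilation [PartialOrder A] [StarOrderedRing A] {v : A}
    {a : ℕ → ℂ} (hs : Summable fun n => a n • isometryDilation v ^ n) :
    ‖∑' n, a n • v ^ n‖ ≤ ‖∑' n, a n • isometryDilation v ^ n‖ := by
  have hcorner : HasSum (fun n => a n • v ^ n) ((∑' n, a n • isometryDilation v ^ n) 0 0) := by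
    let corner : CStarMatrix (Fin 2) (Fin 2) A →L[ℂ] A :=
      .proj 0 ∘L .proj 0 ∘L CStarMatrix.ofMatrixL.symm.toContinuousLinearMap
    refine (hs.hasSum.mapL corner).congr_fun fun n => ?_
    change a n • v ^ n = a n • (isometryDilation v ^ n) 0 0
    rw [(isometryDilation_pow_col_zero v n).1]
  rw [hcorner.tsum_eq]
  exact CStarMatrix.norm_entry_le_norm

theorem norm_tsum_smul_pow_le_of_star_mul_self {v : A} (hv : star v * v = 1) {a : ℕ → ℂ}
    (ha : Summable fun n => ‖a n‖) {M : ℝ} (hM : 0 ≤ M)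
    (hbound : ∀ z ∈ spectrum ℂ v, ‖z‖ = 1 → ‖∑' n, a n • z ^ n‖ ≤ M) :
    ‖∑' n, a n • v ^ n‖ ≤ M := by
  by_cases hcircle : ∃ μ : ℂ, ‖μ‖ = 1 ∧ μ ∉ spectrum ℂ v
  · obtain ⟨μ, hμ, hμv⟩ := hcircle
    have hu := mem_unitary_of_star_mul_self_of_notMem_spectrum hv hμ hμv
    exact norm_tsum_smul_pow_le_of_mem_unitary hu ha hM fun z hz =>
      hbound z hz (spectrum.norm_eq_one_of_unitary hu hz)
  · push Not at hcircle
    let := CStarAlgebra.spectralOrder A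
    have := CStarAlgebra.spectralOrderedRing A
    have hu := isometryDilation_mem_unitary hv
    have hnorm := spectrum.norm_eq_one_of_unitary (𝕜 := ℂ) hu
    refine (norm_tsum_smul_pow_le_isometryDilation ?_).trans
      (norm_tsum_smul_pow_le_of_mem_unitary hu ha hM fun z hz => ?_)
    · exact (hasSum_smul_pow_cfc (isStarNormal_of_mem_unitary hu)
        (fun z hz => (hnorm hz).le) ha).summable
    · exact hbound z (hcircle z (hnorm hz)) (hnorm hz)

end Isometry

section Representation

/-- The restriction of a representation `φ` by bounded operators to an invariant subspace. -/
def restrictInvariant {𝕜 B E : Type*} [NormedField 𝕜] [Semiring B] [Algebra 𝕜 B]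
    [SeminormedAddCommGroup E] [NormedSpace 𝕜 E] (φ : B →ₐ[𝕜] (E →L[𝕜] E)) (K : Submodule 𝕜 E)
    (hK : ∀ b, ∀ x ∈ K, φ b x ∈ K) : B →ₐ[𝕜] (K →L[𝕜] K) where
  toFun b := (φ b).restrict (hK b)
  map_one' := by ext; simp
  map_mul' _ _ := by ext; simp
  map_zero' := by ext; simp
  map_add' _ _ := by ext; simp
  commutes' _ := by ext; simp [Algebra.algebraMap_eq_smul_one]

variable {B H : Type*} [Ring B] [Algebra ℂ B] [NormedAddCommGroup H] [InnerProductSpace ℂ H]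

theorem summable_smul_pow_of_isometry [CompleteSpace H] {V : H →L[ℂ] H} (hV : ∀ x, ‖V x‖ = ‖x‖)
    {a : ℕ → ℂ} (ha : Summable fun n => ‖a n‖) : Summable fun n => a n • V ^ n := by
  have hV_le_one : ‖V‖ ≤ 1 := V.opNorm_le_bound zero_le_one fun x => by rw [hV, one_mul]
  exact summable_smul_pow_of_norm_le_one hV_le_one ha

theorem norm_tsum_smul_pow_le_of_isometry [CompleteSpace H] {V : H →L[ℂ] H}
    (hV : ∀ x, ‖V x‖ = ‖x‖) {a : ℕ → ℂ} (ha : Summable fun n => ‖a n‖) {M : ℝ} (hM : 0 ≤ M)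
    (hbound : ∀ z ∈ spectrum ℂ V, ‖z‖ = 1 → ‖∑' n, a n • z ^ n‖ ≤ M) :
    ‖∑' n, a n • V ^ n‖ ≤ M :=
  norm_tsum_smul_pow_le_of_star_mul_self
    (V.norm_map_iff_adjoint_comp_self.1 hV) ha hM hbound

theorem norm_le_of_hasSum_of_isometry_on_invariant (φ : B →ₐ[ℂ] (H →L[ℂ] H))
    (K : Submodule ℂ H) [CompleteSpace K] (hK : ∀ b, ∀ x ∈ K, φ b x ∈ K) {t : B}
    (hiso : ∀ x ∈ K, ‖φ t x‖ = ‖x‖) {a : ℕ → ℂ} (ha : Summable fun n => ‖a n‖) {M : ℝ}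
    (hM : 0 ≤ M) (hbound : ∀ z ∈ spectrum ℂ t, ‖z‖ = 1 → ‖∑' n, a n • z ^ n‖ ≤ M)
    {x y : H} (hx : x ∈ K) (hy : HasSum (fun n => a n • φ (t ^ n) x) y) : ‖y‖ ≤ M * ‖x‖ := by
  let ρ := restrictInvariant φ K hK
  have hiso' : ∀ x, ‖ρ t x‖ = ‖x‖ := fun x => hiso x x.2
  have hsum := (summable_smul_pow_of_isometry hiso' ha).hasSum
  have hρ : ‖∑' n, a n • ρ t ^ n‖ ≤ M :=
    norm_tsum_smul_pow_le_of_isometry hiso' ha hM fun z hz =>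
      hbound z (AlgHom.spectrum_apply_subset ρ t hz)
  have hpow : ∀ n, K.subtypeL ((a n • ρ t ^ n) ⟨x, hx⟩) = a n • φ (t ^ n) x := fun n => by
    rw [← map_pow]
    rfl
  have hyV : y = (∑' n, a n • ρ t ^ n) ⟨x, hx⟩ :=
    hy.unique <| ((hsum.mapL (.apply ℂ K ⟨x, hx⟩)).mapL K.subtypeL).congr_fun
      fun n => (hpow n).symm
  calc ‖y‖ = ‖(∑' n, a n • ρ t ^ n) ⟨x, hx⟩‖ := by rw [hyV, Submodule.norm_coe]
    _ ≤ M * ‖x‖ := ContinuousLinearMap.le_of_opNorm_le _ hρ _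

/-- The closed cyclic subspace generated by the vector `x` under the representation `φ`, i.e. the
closure of `{φ b x | b : B}`. -/
noncomputable abbrev cyclicSubspace (φ : B →ₐ[ℂ] (H →L[ℂ] H)) (x : H) : Submodule ℂ H :=
  (((ContinuousLinearMap.apply ℂ H x).toLinearMap ∘ₗ φ.toLinearMap).range).topologicalClosure

theorem apply_mem_cyclicSubspace (φ : B →ₐ[ℂ] (H →L[ℂ] H)) (x : H) (b : B) :
    φ b x ∈ cyclicSubspace φ x :=
  Submodule.le_topologicalClosure _ ⟨b, rfl⟩

theorem cyclicSubspace_invariant (φ : B →ₐ[ℂ] (H →L[ℂ] H)) (x : H) (b : B) :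
    ∀ y ∈ cyclicSubspace φ x, φ b y ∈ cyclicSubspace φ x := by
  refine fun y hy => map_mem_closure (φ b).continuous hy ?_
  rintro _ ⟨c, rfl⟩
  exact ⟨b * c, by simp⟩

theorem norm_apply_eq_of_mem_cyclicSubspace {φ : B →ₐ[ℂ] (H →L[ℂ] H)} {x : H} {t : B}
    (hiso : ∀ b, ‖φ (t * b) x‖ = ‖φ b x‖) :
    ∀ y ∈ cyclicSubspace φ x, ‖φ t y‖ = ‖y‖ := by
  refine fun y hy => closure_minimal ?_
    (isClosed_eq (φ t).continuous.norm continuous_norm) hy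
  rintro _ ⟨b, rfl⟩
  simpa using hiso b

theorem norm_le_of_hasSum_of_norm_mul_apply_eq [CompleteSpace H] {φ : B →ₐ[ℂ] (H →L[ℂ] H)}
    {x : H} {t : B} (hiso : ∀ b, ‖φ (t * b) x‖ = ‖φ b x‖) {a : ℕ → ℂ}
    (ha : Summable fun n => ‖a n‖) {M : ℝ} (hM : 0 ≤ M)
    (hbound : ∀ z ∈ spectrum ℂ t, ‖z‖ = 1 → ‖∑' n, a n • z ^ n‖ ≤ M)
    {y : H} (hy : HasSum (fun n => a n • φ (t ^ n) x) y) : ‖y‖ ≤ M * ‖x‖ :=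
  norm_le_of_hasSum_of_isometry_on_invariant φ (cyclicSubspace φ x)
    (cyclicSubspace_invariant φ x) (norm_apply_eq_of_mem_cyclicSubspace hiso) ha hM hbound
    (by simpa using apply_mem_cyclicSubspace φ x 1) hy

theorem self_mem_centralizer_singleton {R A : Type*} [CommSemiring R] [Semiring A] [Algebra R A]
    (t : A) : t ∈ Subalgebra.centralizer R {t} := by
  rintro _ rfl
  rfl

theorem spectrum_centralizer_subset {R A : Type*} [CommRing R] [Ring A] [Algebra R A] (t : A)
    (ht : t ∈ Subalgebra.centralizer R {t}) :
    spectrum R (⟨t, ht⟩ : Subalgebra.centralizer R {t}) ⊆ spectrum R t := by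
  rintro z hz ⟨u, hu⟩
  have hcomm : Commute t ↑u⁻¹ := Commute.units_inv_right <| by
    rw [hu]
    exact (Algebra.commute_algebraMap_right z t).sub_right (.refl t)
  have hmem : ↑u⁻¹ ∈ Subalgebra.centralizer R {t} := by
    rintro _ rfl
    exact hcomm
  refine hz <| isUnit_iff_exists.2 ⟨⟨↑u⁻¹, hmem⟩, Subtype.ext ?_, Subtype.ext ?_⟩
  · change (algebraMap R A z - t) * ↑u⁻¹ = 1
    rw [← hu, u.mul_inv]
  · change ↑u⁻¹ * (algebraMap R A z - t) = 1
    rw [← hu, u.inv_mul]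

end Representation

section GNS

open scoped ComplexOrder

variable {A : Type*} [CStarAlgebra A] [PartialOrder A] [StarOrderedRing A]

theorem norm_gnsStarAlgHom_apply_one_sq (ψ : A →ₚ[ℂ] ℂ) (r : A) :
    ‖ψ.gnsStarAlgHom r (ψ.toPreGNS 1 : ψ.GNS)‖ ^ 2 = (ψ (star r * r)).re := by
  have happly : ψ.gnsStarAlgHom r (ψ.toPreGNS 1 : ψ.GNS) = (ψ.toPreGNS r : ψ.GNS) :=
    ψ.gnsNonUnitalStarAlgHom_apply_coe.trans (by simp)
  rw [happly, UniformSpace.Completion.norm_coe, ← Complex.ofReal_re (_ ^ 2), Complex.ofReal_pow,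
    ψ.preGNS_norm_sq, ψ.ofPreGNS_toPreGNS]

theorem re_apply_star_mul_self_le_of_invariant (ψ : A →ₚ[ℂ] ℂ) {t : A}
    (hψ : ∀ r, ψ (star t * r * t) = ψ r) {a : ℕ → ℂ} (ha : Summable fun n => ‖a n‖) {M : ℝ}
    (hM : 0 ≤ M) (hbound : ∀ z ∈ spectrum ℂ t, ‖z‖ = 1 → ‖∑' n, a n • z ^ n‖ ≤ M)
    {s : A} (hs : HasSum (fun n => a n • t ^ n) s) :
    (ψ (star s * s)).re ≤ M ^ 2 * (ψ 1).re := by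
  let ξ : ψ.GNS := ψ.toPreGNS 1
  let C := Subalgebra.centralizer ℂ {t}
  let φ : C →ₐ[ℂ] (ψ.GNS →L[ℂ] ψ.GNS) := ψ.gnsStarAlgHom.toAlgHom.comp C.val
  let t' : C := ⟨t, self_mem_centralizer_singleton t⟩
  have hiso : ∀ r : C, ‖φ (t' * r) ξ‖ = ‖φ r ξ‖ := fun r => by
    have hcomm : t * r = r * t := r.2 t rfl
    refine (sq_eq_sq₀ (norm_nonneg _) (norm_nonneg _)).1 ?_
    calc ‖φ (t' * r) ξ‖ ^ 2 = (ψ (star (t * r) * (t * r))).re :=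
          norm_gnsStarAlgHom_apply_one_sq ψ (t * r)
      _ = (ψ (star t * (star r.1 * r) * t)).re := by
          rw [hcomm, star_mul]
          simp only [mul_assoc]
      _ = (ψ (star r.1 * r)).re := by rw [hψ]
      _ = ‖φ r ξ‖ ^ 2 := (norm_gnsStarAlgHom_apply_one_sq ψ r).symm
  have hsum : HasSum (fun n => a n • φ (t' ^ n) ξ) (ψ.gnsStarAlgHom s ξ) := by
    have := hs.map ψ.gnsStarAlgHom (map_continuous ψ.gnsStarAlgHom)
    refine (this.mapL (.apply ℂ ψ.GNS ξ)).congr_fun fun n => ?_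
    change a n • ψ.gnsStarAlgHom (t ^ n) ξ = ψ.gnsStarAlgHom (a n • t ^ n) ξ
    rw [map_smul]
    rfl
  have hle := norm_le_of_hasSum_of_norm_mul_apply_eq hiso ha hM
    (fun z hz => hbound z (spectrum_centralizer_subset t _ hz)) hsum
  have hξ : ‖ξ‖ ^ 2 = (ψ 1).re := by
    simpa only [map_one, one_apply_eq_self, star_one, mul_one] using
      norm_gnsStarAlgHom_apply_one_sq ψ 1
  rw [← norm_gnsStarAlgHom_apply_one_sq, ← hξ, ← mul_pow]
  gcongr

end GNS

section Averaging

open scoped InnerProductSpace ComplexOrder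

theorem exists_strongDual_forall_tendsto_of_norm_le {𝕜 E ι : Type*} [RCLike 𝕜]
    [SeminormedAddCommGroup E] [NormedSpace 𝕜 E] (U : Ultrafilter ι) {ψ : ι → StrongDual 𝕜 E}
    {C : ℝ} (hψ : ∀ i, ‖ψ i‖ ≤ C) :
    ∃ φ : StrongDual 𝕜 E, ∀ x, Tendsto (fun i => ψ i x) U (𝓝 (φ x)) := by
  have hmem : (U.map fun i => StrongDual.toWeakDual (ψ i) : Filter (WeakDual 𝕜 E)) ≤
      𝓟 (WeakDual.toStrongDual ⁻¹' Metric.closedBall 0 C) :=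
    tendsto_principal.2 <| .of_forall fun i => mem_closedBall_zero_iff.2 (hψ i)
  obtain ⟨φ, -, hφ⟩ := (WeakDual.isCompact_closedBall (0 : StrongDual 𝕜 E) C).ultrafilter_le_nhds
    _ hmem
  exact ⟨WeakDual.toStrongDual φ, fun x => ((WeakDual.eval_continuous x).tendsto φ).comp hφ⟩

variable {X : Type*} [NormedAddCommGroup X] [InnerProductSpace ℂ X]

/-- The vector functional `B ↦ ⟪x, B x⟫` on the bounded operators. -/
noncomputable def vectorFunctional (x : X) : StrongDual ℂ (X →L[ℂ] X) :=
  innerSL ℂ x ∘L .apply ℂ X x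

@[simp]
theorem vectorFunctional_apply (x : X) (B : X →L[ℂ] X) : vectorFunctional x B = ⟪x, B x⟫_ℂ :=
  rfl

theorem norm_vectorFunctional_apply_le (x : X) (B : X →L[ℂ] X) :
    ‖vectorFunctional x B‖ ≤ ‖x‖ ^ 2 * ‖B‖ :=
  calc ‖⟪x, B x⟫_ℂ‖ ≤ ‖x‖ * (‖B‖ * ‖x‖) :=
        (norm_inner_le_norm _ _).trans (by gcongr; exact B.le_opNorm x)
    _ = ‖x‖ ^ 2 * ‖B‖ := by ring

/-- The average of the vector functionals of the first `n + 1` points of the `T`-orbit of `x`. -/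
noncomputable def cesaroFunctional (T : X →L[ℂ] X) (x : X) (n : ℕ) : StrongDual ℂ (X →L[ℂ] X) :=
  ((n : ℝ) + 1)⁻¹ • ∑ k ∈ Finset.range (n + 1), vectorFunctional ((T ^ k) x)

theorem cesaroFunctional_apply (T : X →L[ℂ] X) (x : X) (n : ℕ) (B : X →L[ℂ] X) :
    cesaroFunctional T x n B =
      ((n : ℝ) + 1)⁻¹ • ∑ k ∈ Finset.range (n + 1), vectorFunctional ((T ^ k) x) B := by
  simp [cesaroFunctional]

variable {T : X →L[ℂ] X}

theorem antitone_norm_pow_apply (hT : ‖T‖ ≤ 1) (x : X) : Antitone fun n => ‖(T ^ n) x‖ :=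
  antitone_nat_of_succ_le fun n => by
    rw [pow_succ']
    exact T.le_of_opNorm_le hT ((T ^ n) x) |>.trans_eq (one_mul _)

theorem norm_pow_apply_le (hT : ‖T‖ ≤ 1) (x : X) (n : ℕ) : ‖(T ^ n) x‖ ≤ ‖x‖ := by
  simpa using antitone_norm_pow_apply hT x n.zero_le

theorem norm_cesaroFunctional_le (hT : ‖T‖ ≤ 1) (x : X) (n : ℕ) :
    ‖cesaroFunctional T x n‖ ≤ ‖x‖ ^ 2 := by
  refine ContinuousLinearMap.opNorm_le_bound _ (by positivity) fun B => ?_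
  have hterm : ∀ k, ‖vectorFunctional ((T ^ k) x) B‖ ≤ ‖x‖ ^ 2 * ‖B‖ := fun k =>
    (norm_vectorFunctional_apply_le _ B).trans (by gcongr; exact norm_pow_apply_le hT x k)
  rw [cesaroFunctional_apply, norm_smul, Real.norm_of_nonneg (by positivity), ← div_eq_inv_mul,
    div_le_iff₀' (by positivity)]
  simpa using norm_sum_le_of_le (Finset.range (n + 1)) fun k _ => hterm k

theorem cesaroFunctional_nonneg [CompleteSpace X] (x : X) (n : ℕ) {B : X →L[ℂ] X} (hB : 0 ≤ B) :
    0 ≤ cesaroFunctional T x n B := by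
  rw [cesaroFunctional_apply]
  exact smul_nonneg (by positivity) <| Finset.sum_nonneg fun k _ =>
    ((ContinuousLinearMap.nonneg_iff_isPositive B).1 hB).inner_nonneg_right _

theorem tendsto_cesaroFunctional_conj_sub [CompleteSpace X] (hT : ‖T‖ ≤ 1) {v : ℕ → X}
    (hv : ∀ n, ‖v n‖ ≤ 1) (B : X →L[ℂ] X) :
    Tendsto (fun n => cesaroFunctional T (v n) n (star T * B * T) - cesaroFunctional T (v n) n B)
      atTop (𝓝 0) := by
  have hshift : ∀ x k, vectorFunctional ((T ^ k) x) (star T * B * T) =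
      vectorFunctional ((T ^ (k + 1)) x) B := fun x k => by
    simp [pow_succ', ContinuousLinearMap.star_eq_adjoint, ContinuousLinearMap.adjoint_inner_right]
  have htelescope : ∀ x n, cesaroFunctional T x n (star T * B * T) - cesaroFunctional T x n B =
      ((n : ℝ) + 1)⁻¹ • (vectorFunctional ((T ^ (n + 1)) x) B - vectorFunctional x B) :=
    fun x n => by
      simp only [cesaroFunctional_apply, hshift, ← smul_sub, ← Finset.sum_sub_distrib]
      rw [Finset.sum_range_sub fun k => vectorFunctional ((T ^ k) x) B]
      simp
  have hterm : ∀ x : X, ‖x‖ ≤ 1 → ‖vectorFunctional x B‖ ≤ ‖B‖ := fun x hx =>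
    (norm_vectorFunctional_apply_le x B).trans
      (mul_le_of_le_one_left (norm_nonneg _) (pow_le_one₀ (norm_nonneg _) hx))
  refine squeeze_zero_norm (a := fun n : ℕ => ((n : ℝ) + 1)⁻¹ * (‖B‖ + ‖B‖)) (fun n => ?_) ?_
  · rw [htelescope, norm_smul, Real.norm_of_nonneg (by positivity)]
    gcongr
    exact norm_sub_le_of_le (hterm _ ((norm_pow_apply_le hT _ _).trans (hv n))) (hterm _ (hv n))
  · have hinv : Tendsto (fun n : ℕ => ((n : ℝ) + 1)⁻¹) atTop (𝓝 0) :=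
      (tendsto_natCast_atTop_atTop.atTop_add tendsto_const_nhds).inv_tendsto_atTop
    simpa using hinv.mul_const (‖B‖ + ‖B‖)

theorem sq_norm_pow_apply_le_re_cesaroFunctional [CompleteSpace X] (hT : ‖T‖ ≤ 1)
    {S : X →L[ℂ] X} (hS : Commute S T) (x : X) (n : ℕ) :
    ‖(T ^ n) (S x)‖ ^ 2 ≤ (cesaroFunctional T x n (star S * S)).re := by
  have hterm : ∀ k ∈ Finset.range (n + 1),
      ‖(T ^ n) (S x)‖ ^ 2 ≤ (vectorFunctional ((T ^ k) x) (star S * S)).re := fun k hk => by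
    have hcomm : S ((T ^ k) x) = (T ^ k) (S x) := DFunLike.congr_fun (hS.pow_right k).eq x
    calc ‖(T ^ n) (S x)‖ ^ 2 ≤ ‖(T ^ k) (S x)‖ ^ 2 := by
          gcongr
          exact antitone_norm_pow_apply hT (S x) (Finset.mem_range_succ_iff.1 hk)
      _ = (vectorFunctional ((T ^ k) x) (star S * S)).re := by
          rw [vectorFunctional_apply, ← hcomm]
          exact S.apply_norm_sq_eq_inner_adjoint_right _
  rw [cesaroFunctional_apply, Complex.smul_re, Complex.re_sum, smul_eq_mul, ← div_eq_inv_mul,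
    le_div_iff₀ (by positivity)]
  simpa [mul_comm] using Finset.card_nsmul_le_sum _ _ _ hterm

theorem exists_invariant_positiveLinearMap [CompleteSpace X] (hT : ‖T‖ ≤ 1) {v : ℕ → X}
    (hv : ∀ n, ‖v n‖ ≤ 1) :
    ∃ ψ : (X →L[ℂ] X) →ₚ[ℂ] ℂ, (∀ B, ψ (star T * B * T) = ψ B) ∧ (ψ 1).re ≤ 1 ∧
      ∀ S d, Commute S T → 0 ≤ d → (∀ n, d ≤ ‖(T ^ n) (S (v n))‖) →
        d ^ 2 ≤ (ψ (star S * S)).re := by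
  have hnorm : ∀ n, ‖cesaroFunctional T (v n) n‖ ≤ 1 := fun n =>
    (norm_cesaroFunctional_le hT (v n) n).trans (pow_le_one₀ (norm_nonneg _) (hv n))
  obtain ⟨φ, hφ⟩ := exists_strongDual_forall_tendsto_of_norm_le (hyperfilter ℕ) hnorm
  have hφ_re : ∀ B, Tendsto (fun n => (cesaroFunctional T (v n) n B).re) (hyperfilter ℕ)
      (𝓝 (φ B).re) := fun B => (Complex.continuous_re.tendsto _).comp (hφ B)
  refine ⟨.mk₀ φ.toLinearMap fun B hB => ?_, fun B => ?_, ?_, fun S d hS hd hle => ?_⟩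
  · exact ge_of_tendsto' (hφ B) fun n => cesaroFunctional_nonneg (v n) n hB
  · refine sub_eq_zero.1 <| tendsto_nhds_unique ((hφ _).sub (hφ B)) ?_
    exact (tendsto_cesaroFunctional_conj_sub hT hv B).mono_left Nat.hyperfilter_le_atTop
  · refine le_of_tendsto' (hφ_re 1) fun n => ?_
    calc (cesaroFunctional T (v n) n 1).re ≤ ‖cesaroFunctional T (v n) n 1‖ := Complex.re_le_norm _
      _ ≤ 1 * ‖(1 : X →L[ℂ] X)‖ := ContinuousLinearMap.le_of_opNorm_le _ (hnorm n) 1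
      _ ≤ 1 := (one_mul _).trans_le ContinuousLinearMap.norm_id_le
  · refine ge_of_tendsto' (hφ_re _) fun n => ?_
    exact (pow_le_pow_left₀ hd (hle n) 2).trans
      (sq_norm_pow_apply_le_re_cesaroFunctional hT hS (v n) n)

end Averaging

section Limsup

variable {X : Type*} [NormedAddCommGroup X] [InnerProductSpace ℂ X] [CompleteSpace X]
  {T : X →L[ℂ] X}

theorem antitone_norm_pow_mul {A : Type*} [SeminormedRing A] {t : A} (ht : ‖t‖ ≤ 1) (s : A) :
    Antitone fun n => ‖t ^ n * s‖ :=
  antitone_nat_of_succ_le fun n => by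
    rw [pow_succ', mul_assoc]
    exact (norm_mul_le _ _).trans (mul_le_of_le_one_left (norm_nonneg _) ht)

theorem le_of_lt_norm_pow_mul_tsum_smul_pow (hT : ‖T‖ ≤ 1) {a : ℕ → ℂ}
    (ha : Summable fun n => ‖a n‖) {M : ℝ} (hM : 0 ≤ M)
    (hbound : ∀ z ∈ spectrum ℂ T, ‖z‖ = 1 → ‖∑' n, a n • z ^ n‖ ≤ M) {d : ℝ} (hd : 0 ≤ d)
    (hlt : ∀ n, d < ‖T ^ n * ∑' m, a m • T ^ m‖) : d ≤ M := by
  set S := ∑' m, a m • T ^ m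
  have hS : HasSum (fun m => a m • T ^ m) S := (summable_smul_pow_of_norm_le_one hT ha).hasSum
  have hcomm : Commute S T :=
    (Commute.tsum_right T fun m => ((Commute.refl T).pow_right m).smul_right (a m)).symm
  choose v hv hdv using fun n => (T ^ n * S).exists_lt_apply_of_lt_opNorm (hlt n)
  obtain ⟨ψ, hψ_inv, hψ_one, hψ⟩ := exists_invariant_positiveLinearMap hT fun n => (hv n).le
  refine (sq_le_sq₀ hd hM).1 ?_
  calc d ^ 2 ≤ (ψ (star S * S)).re := hψ S d hcomm hd fun n => (hdv n).le
    _ ≤ M ^ 2 * (ψ 1).re := re_apply_star_mul_self_le_of_invariant ψ hψ_inv ha hM hbound hS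
    _ ≤ M ^ 2 := mul_le_of_le_one_right (sq_nonneg M) hψ_one

theorem limsup_norm_pow_mul_tsum_smul_pow_le (hT : ‖T‖ ≤ 1) {a : ℕ → ℂ}
    (ha : Summable fun n => ‖a n‖) {M : ℝ} (hM : 0 ≤ M)
    (hbound : ∀ z ∈ spectrum ℂ T, ‖z‖ = 1 → ‖∑' n, a n • z ^ n‖ ≤ M) :
    limsup (fun n => ‖T ^ n * ∑' m, a m • T ^ m‖) atTop ≤ M := by
  by_contra! hlt
  obtain ⟨d, hMd, hd⟩ := exists_between hlt
  refine hMd.not_ge (le_of_lt_norm_pow_mul_tsum_smul_pow hT ha hM hbound (hM.trans hMd.le)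
    fun n => hd.trans_le ?_)
  refine limsup_le_of_le (isCoboundedUnder_le_of_le atTop fun _ => norm_nonneg _) ?_
  exact (eventually_ge_atTop n).mono fun k hk => antitone_norm_pow_mul hT _ hk

end Limsup

section ZeroExtension

/-- The extension of a one-sided sequence to `ℤ` by zero, i.e. the embedding `ι` of `ℓ¹(ℕ)` into
`ℓ¹(ℤ)`. -/
def zeroExtend {M : Type*} [Zero M] (f : ℕ → M) (n : ℤ) : M :=
  if 0 ≤ n then f n.toNat else 0

theorem hasSum_zeroExtend {M : Type*} [AddCommMonoid M] [TopologicalSpace M] {f : ℕ → M} {s : M}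
    (hf : HasSum f s) : HasSum (zeroExtend f) s := by
  have hsupport : ∀ n ∉ Set.range ((↑) : ℕ → ℤ), zeroExtend f n = 0 := fun n hn =>
    if_neg fun h0 => hn ⟨n.toNat, Int.toNat_of_nonneg h0⟩
  exact (Nat.cast_injective.hasSum_iff hsupport).1 hf

theorem norm_tsum_smul_pow_le_tsum_norm_zeroExtend_sub {a : ℕ → ℂ} (ha : Summable fun n => ‖a n‖)
    {b : ℤ → ℂ} (hb : Summable fun n => ‖b n‖) {z : ℂ} (hz : ‖z‖ = 1)
    (hbz : ∑' n, b n * z ^ n = 0) :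
    ‖∑' n, a n • z ^ n‖ ≤ ∑' n, ‖zeroExtend a n - b n‖ := by
  have haz : HasSum (fun n => zeroExtend a n * z ^ n) (∑' n, a n • z ^ n) := by
    refine (hasSum_zeroExtend (summable_smul_pow_of_norm_le_one hz.le ha).hasSum).congr_fun
      fun n => ?_
    rcases n with n | n <;> simp [zeroExtend]
  have hbz' : HasSum (fun n => b n * z ^ n) 0 :=
    hbz ▸ (Summable.of_norm (by simpa [hz] using hb)).hasSum
  have hab : Summable fun n => ‖zeroExtend a n - b n‖ :=
    ((hasSum_zeroExtend ha.of_norm.hasSum).summable.sub hb.of_norm).norm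
  simpa using (haz.sub hbz').norm_le_of_bounded hab.hasSum fun n => by
    rw [← sub_mul, norm_mul, norm_zpow, hz, one_zpow, mul_one]

end ZeroExtension

/-- ℤ₊-instance of Theorem 4.2: if `T` is a contraction on a complex Hilbert space,
`Λ := σ(T) ∩ 𝕋` and `a ∈ ℓ¹(ℕ)`, then `limsup_n ‖Tⁿ â(T)‖ ≤ dist(a, K_Λ)`, where `K_Λ`
is the set of `b ∈ ℓ¹(ℤ)` whose Fourier transform vanishes on `Λ` and `a` is viewed in
`ℓ¹(ℤ)` by extension by zero. -/
theorem stmt_12 {X : Type*} [NormedAddCommGroup X] [InnerProductSpace ℂ X] [CompleteSpace X]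
    (T : X →L[ℂ] X) (hT : ‖T‖ ≤ 1)
    (a : ℕ → ℂ) (ha : Summable fun n : ℕ => ‖a n‖) :
    Filter.limsup (fun n : ℕ => ‖T ^ n * (∑' m : ℕ, a m • T ^ m)‖) atTop ≤
      sInf { r : ℝ | ∃ b : ℤ → ℂ, (Summable fun n : ℤ => ‖b n‖) ∧
          (∀ lam ∈ spectrum ℂ T, ‖lam‖ = 1 → (∑' n : ℤ, b n * lam ^ n) = 0) ∧
          r = ∑' n : ℤ, ‖(if 0 ≤ n then a n.toNat else 0) - b n‖ } := by
  refine le_csInf ⟨_, 0, by simp, by simp, rfl⟩ ?_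
  rintro _ ⟨b, hb, hb_zero, rfl⟩
  exact limsup_norm_pow_mul_tsum_smul_pow_le hT ha (tsum_nonneg fun _ => norm_nonneg _)
    fun z hz hz_norm =>
      norm_tsum_smul_pow_le_tsum_norm_zeroExtend_sub ha hb hz_norm (hb_zero z hz hz_norm)
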